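/- Let Ω ⊆ ℝ^d be a nonempty open set, with d ∈ ℕ, and let f ∈ L¹(Ω) be nonnegative. Suppose that the upper approximate limit f^∨ is upper semicontinuous on Ω and that M_Ω f(x) ≥ f^∨(x) for every x ∈ Ω. Then the non-centered maximal function M_Ω f : Ω → [0,∞] is continuous on Ω. -/

import Mathlib

open MeasureTheory Metric Filter Topology
open scoped ENNReal

/-- The non-centered Hardy–Littlewood maximal function of `f` relative to the open set
`Ω ⊆ ℝᵈ`: the supremum of the averages of `|f|` over all open balls contained in `Ω`
that contain `x`, valued in `[0,∞]`. -/
noncomputable def maximalFn {d : ℕ} (Ω : Set (EuclideanSpace ℝ (Fin d)))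
    (f : EuclideanSpace ℝ (Fin d) → ℝ) (x : EuclideanSpace ℝ (Fin d)) : ℝ≥0∞ :=
  ⨆ (z : EuclideanSpace ℝ (Fin d)) (r : ℝ) (_ : 0 < r) (_ : x ∈ ball z r)
    (_ : ball z r ⊆ Ω),
      (∫⁻ y in ball z r, ENNReal.ofReal |f y| ∂volume) / volume (ball z r)

/-- The upper approximate limit `f^∨(x)` with respect to Lebesgue measure, valued in the
extended reals (with the convention `inf ∅ = +∞`). -/
noncomputable def upperApproxLimit {d : ℕ}
    (f : EuclideanSpace ℝ (Fin d) → ℝ) (x : EuclideanSpace ℝ (Fin d)) : EReal :=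
  sInf ((fun t : ℝ => (t : EReal)) ''
    {t : ℝ | Tendsto
      (fun r : ℝ => volume {y | y ∈ ball x r ∧ t < f y} / volume (ball x r))
      (𝓝[>] (0 : ℝ)) (𝓝 0)})

lemma aux_null {d : ℕ} (f : EuclideanSpace ℝ (Fin d) → ℝ) (t : ℝ)
    (B : Set (EuclideanSpace ℝ (Fin d))) (hB : MeasurableSet B)
    (h : ∀ y ∈ B, upperApproxLimit f y < (t : EReal)) :
    volume {y | y ∈ B ∧ t < f y} = 0 := by
  set E := {y | y ∈ B ∧ t < f y} with hE
  have h1 := Besicovitch.ae_tendsto_measure_inter_div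
    (volume : Measure (EuclideanSpace ℝ (Fin d))) E
  have h2 : ∀ᵐ y ∂(volume.restrict E), False := by
    have hm : ∀ᵐ y ∂(volume.restrict E), y ∈ B := by
      exact ae_restrict_of_ae_restrict_of_subset (fun y hy => hy.1) (ae_restrict_mem hB)
    filter_upwards [h1, hm] with y hy hyB
    have hlt := h y hyB
    unfold upperApproxLimit at hlt
    rw [sInf_lt_iff] at hlt
    obtain ⟨_, ⟨s, hs, rfl⟩, hst⟩ := hlt
    have hst' : s < t := EReal.coe_lt_coe_iff.1 hst
    simp only [Set.mem_ofPred_eq] at hs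
    have h0 : Tendsto (fun r => volume (E ∩ closedBall y r) / volume (closedBall y r))
        (𝓝[>] 0) (𝓝 0) := by
      refine tendsto_of_tendsto_of_tendsto_of_le_of_le' tendsto_const_nhds hs
        (Eventually.of_forall fun _ => zero_le) ?_
      filter_upwards [self_mem_nhdsWithin] with r hr
      have hr : 0 < r := hr
      rw [Measure.addHaar_closedBall _ _ hr.le, ← Measure.addHaar_ball_of_pos _ y hr]
      refine ENNReal.div_le_div_right ?_ _
      calc volume (E ∩ closedBall y r) ≤ volume ((E ∩ ball y r) ∪ sphere y r) := by
            apply measure_mono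
            rintro w ⟨hw, hw2⟩
            rcases eq_or_lt_of_le (mem_closedBall.1 hw2) with h | h
            · exact Or.inr h
            · exact Or.inl ⟨hw, h⟩
        _ ≤ volume (E ∩ ball y r) + volume (sphere y r) := measure_union_le _ _
        _ = volume (E ∩ ball y r) := by
            rw [Measure.addHaar_sphere_of_ne_zero _ _ hr.ne', add_zero]
        _ ≤ volume {w | w ∈ ball y r ∧ s < f w} := by
            apply measure_mono
            rintro w ⟨hw, hw2⟩
            exact ⟨hw2, hst'.trans hw.2⟩
    exact zero_ne_one (tendsto_nhds_unique h0 hy)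
  have := (ae_iff.1 h2)
  simpa using this

lemma aux_tendsto {d : ℕ} (g : EuclideanSpace ℝ (Fin d) → ℝ≥0∞) (hg : AEMeasurable g)
    (hi : ∫⁻ y, g y ≠ ⊤) (z : ℕ → EuclideanSpace ℝ (Fin d)) (r : ℕ → ℝ)
    (z0 : EuclideanSpace ℝ (Fin d)) (r0 : ℝ) (hr0 : 0 < r0)
    (hz : Tendsto z atTop (𝓝 z0)) (hr : Tendsto r atTop (𝓝 r0)) :
    Tendsto (fun n => (∫⁻ y in ball (z n) (r n), g y) / volume (ball (z n) (r n))) atTop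
      (𝓝 ((∫⁻ y in ball z0 r0, g y) / volume (ball z0 r0))) := by
  have hv0 : volume (ball z0 r0) ≠ 0 := (measure_ball_pos _ _ hr0).ne'
  have hvt : volume (ball z0 r0) ≠ ⊤ := measure_ball_lt_top.ne
  have hnum : Tendsto (fun n => ∫⁻ y in ball (z n) (r n), g y) atTop
      (𝓝 (∫⁻ y in ball z0 r0, g y)) := by
    simp_rw [← lintegral_indicator measurableSet_ball]
    refine tendsto_lintegral_of_dominated_convergence' g
      (fun n => hg.indicator measurableSet_ball)
      (fun n => Eventually.of_forall fun y => Set.indicator_le_self _ _ _) hi ?_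
    have hs : ∀ᵐ y, y ∉ sphere z0 r0 := by
      exact measure_eq_zero_iff_ae_notMem.1 (Measure.addHaar_sphere_of_ne_zero volume z0 hr0.ne')
    filter_upwards [hs] with y hy
    have hd : Tendsto (fun n => dist y (z n)) atTop (𝓝 (dist y z0)) := tendsto_const_nhds.dist hz
    apply tendsto_nhds_of_eventually_eq
    rcases lt_or_gt_of_ne (show dist y z0 ≠ r0 from hy) with h | h
    · filter_upwards [hd.eventually_lt hr h] with n hn
      rw [Set.indicator_of_mem (mem_ball.2 hn), Set.indicator_of_mem (mem_ball.2 h)]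
    · filter_upwards [hr.eventually_lt hd h] with n hn
      rw [Set.indicator_of_notMem (by simpa using hn.le),
        Set.indicator_of_notMem (by simpa using h.le)]
  have hden : Tendsto (fun n => volume (ball (z n) (r n))) atTop (𝓝 (volume (ball z0 r0))) := by
    rw [Measure.addHaar_ball_of_pos _ _ hr0]
    have : (fun n => volume (ball (z n) (r n))) =ᶠ[atTop] fun n =>
        ENNReal.ofReal (r n ^ Module.finrank ℝ (EuclideanSpace ℝ (Fin d))) *
          volume (ball (0 : EuclideanSpace ℝ (Fin d)) 1) := by
      filter_upwards [hr.eventually_const_lt hr0] with n hn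
      rw [Measure.addHaar_ball_of_pos _ _ hn]
    rw [tendsto_congr' this]
    exact ENNReal.Tendsto.mul_const (ENNReal.tendsto_ofReal (hr.pow _))
      (Or.inr measure_ball_lt_top.ne)
  have hnt : ∫⁻ y in ball z0 r0, g y ≠ ⊤ :=
    ne_top_of_le_ne_top hi (setLIntegral_le_lintegral _ _)
  exact ENNReal.Tendsto.div hnum (Or.inr hv0) hden (Or.inr hnt)

lemma aux_geom {d : ℕ} (x z w : EuclideanSpace ℝ (Fin d)) (r η ε : ℝ) (hr : 0 < r) (hη : 0 < η)
    (h0 : 0 < ε) (h1 : ε < 1) (hx : dist x z ≤ r)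
    (hw : w ∈ ball (z + ε • (x - z)) (Real.sqrt ((1 - ε)^2 * r^2 + ε * η^2))) :
    w ∈ ball z r ∪ ball x η := by
  by_contra hcon
  simp only [Set.mem_union, mem_ball, not_or, not_lt] at hcon
  obtain ⟨ha, hb⟩ := hcon
  rw [mem_ball, dist_eq_norm] at hw
  rw [dist_eq_norm] at hx ha hb
  have hw2 := (Real.lt_sqrt (norm_nonneg _)).1 hw
  have e1 : w - (z + ε • (x - z)) = (w - z) - ε • (x - z) := by abel
  have e2 : w - x = (w - z) - (x - z) := by abel
  rw [e1, norm_sub_sq_real, inner_smul_right, norm_smul, Real.norm_of_nonneg h0.le] at hw2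
  have hb2 : η^2 ≤ ‖w - x‖^2 := by gcongr
  rw [e2, norm_sub_sq_real] at hb2
  have ha2 : r^2 ≤ ‖w - z‖^2 := by gcongr
  have hx2 : ‖x - z‖^2 ≤ r^2 := by gcongr
  have q1 := mul_le_mul_of_nonneg_left hb2 h0.le
  have q2 := mul_le_mul_of_nonneg_left ha2 (sub_pos.2 h1).le
  have q3 := mul_le_mul_of_nonneg_left hx2 (mul_pos h0 (sub_pos.2 h1)).le
  nlinarith

lemma aux_mem {d : ℕ} (x z : EuclideanSpace ℝ (Fin d)) (r η ε : ℝ) (hr : 0 < r) (hη : 0 < η)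
    (h0 : 0 < ε) (h1 : ε < 1) (hx : dist x z ≤ r) :
    x ∈ ball (z + ε • (x - z)) (Real.sqrt ((1 - ε)^2 * r^2 + ε * η^2)) := by
  rw [mem_ball, dist_eq_norm]
  rw [dist_eq_norm] at hx
  apply Real.lt_sqrt_of_sq_lt
  have e1 : x - (z + ε • (x - z)) = (1 - ε) • (x - z) := by module
  rw [e1, norm_smul, mul_pow, Real.norm_of_nonneg (by linarith)]
  have : ‖x - z‖^2 ≤ r^2 := by gcongr
  have := mul_le_mul_of_nonneg_left this (sq_nonneg (1-ε))
  have : 0 < ε * η^2 := by positivity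
  linarith

lemma le_maximalFn {d : ℕ} {Ω : Set (EuclideanSpace ℝ (Fin d))}
    {f : EuclideanSpace ℝ (Fin d) → ℝ} {x z : EuclideanSpace ℝ (Fin d)} {r : ℝ}
    (hr : 0 < r) (hx : x ∈ ball z r) (hb : ball z r ⊆ Ω) :
    (∫⁻ y in ball z r, ENNReal.ofReal |f y| ∂volume) / volume (ball z r) ≤ maximalFn Ω f x :=
  le_iSup_of_le z <| le_iSup_of_le r <| le_iSup_of_le hr <| le_iSup_of_le hx <|
    le_iSup_of_le hb le_rfl

lemma lt_maximalFn {d : ℕ} {Ω : Set (EuclideanSpace ℝ (Fin d))}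
    {f : EuclideanSpace ℝ (Fin d) → ℝ} {x : EuclideanSpace ℝ (Fin d)} {c : ℝ≥0∞}
    (h : c < maximalFn Ω f x) : ∃ z r, 0 < r ∧ x ∈ ball z r ∧ ball z r ⊆ Ω ∧
      c < (∫⁻ y in ball z r, ENNReal.ofReal |f y| ∂volume) / volume (ball z r) := by
  unfold maximalFn at h
  simp only [lt_iSup_iff] at h
  obtain ⟨z, r, h1, h2, h3, h4⟩ := h
  exact ⟨z, r, h1, h2, h3, h4⟩

/-- Limit balls: the average over the limit ball is dominated by the maximal function. -/
lemma aux_limit {d : ℕ} (Ω : Set (EuclideanSpace ℝ (Fin d))) (hΩ : IsOpen Ω)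
    (f : EuclideanSpace ℝ (Fin d) → ℝ) (g : EuclideanSpace ℝ (Fin d) → ℝ≥0∞) (hg : AEMeasurable g)
    (hi : ∫⁻ y, g y ≠ ⊤) (hgf : ∀ y ∈ Ω, g y = ENNReal.ofReal |f y|)
    (x z : EuclideanSpace ℝ (Fin d)) (r : ℝ) (hr : 0 < r) (hxΩ : x ∈ Ω)
    (hx : dist x z ≤ r) (hb : ball z r ⊆ Ω) :
    (∫⁻ y in ball z r, g y) / volume (ball z r) ≤ maximalFn Ω f x := by
  obtain ⟨η, hη, hηΩ⟩ := Metric.isOpen_iff.1 hΩ x hxΩ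
  set ε : ℕ → ℝ := fun n => 1 / ((n : ℝ) + 2) with hε
  have hεp : ∀ n, 0 < ε n := fun n => by simp only [hε]; positivity
  have hε1 : ∀ n, ε n < 1 := fun n => by
    simp only [hε]; rw [div_lt_one (by positivity)]
    have : (0:ℝ) ≤ n := by positivity
    linarith
  have hεt : Tendsto ε atTop (𝓝 0) := by
    have := (tendsto_one_div_add_atTop_nhds_zero_nat (𝕜 := ℝ)).comp (tendsto_add_atTop_nat 1)
    refine this.congr fun n => ?_
    simp only [hε, Function.comp]; push_cast; ring_nf
  have hzt : Tendsto (fun n => z + ε n • (x - z)) atTop (𝓝 z) := by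
    have := (tendsto_const_nhds (x := z)).add (hεt.smul_const (x - z))
    simpa using this
  have hrt : Tendsto (fun n => Real.sqrt ((1 - ε n)^2 * r^2 + ε n * η^2)) atTop (𝓝 r) := by
    have hc : Continuous fun e : ℝ => Real.sqrt ((1 - e)^2 * r^2 + e * η^2) := by fun_prop
    have := (hc.tendsto 0).comp hεt
    simpa [Real.sqrt_sq hr.le, Function.comp_def] using this
  refine le_of_tendsto (aux_tendsto g hg hi _ _ z r hr hzt hrt) (Eventually.of_forall fun n => ?_)
  have hsub : ball (z + ε n • (x - z)) (Real.sqrt ((1 - ε n)^2 * r^2 + ε n * η^2)) ⊆ Ω := by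
    intro w hw
    rcases aux_geom x z w r η (ε n) hr hη (hεp n) (hε1 n) hx hw with h | h
    · exact hb h
    · exact hηΩ h
  have hxm := aux_mem x z r η (ε n) hr hη (hεp n) (hε1 n) hx
  rw [setLIntegral_congr_fun measurableSet_ball (fun y hy => hgf y (hsub hy))]
  exact le_maximalFn (pos_of_mem_ball hxm) hxm hsub

/-- Let `Ω ⊆ ℝᵈ` be a nonempty open set and `f ∈ L¹(Ω)` nonnegative.
If the upper approximate limit `f^∨` is upper semicontinuous on `Ω` and
`M_Ω f(x) ≥ f^∨(x)` for every `x ∈ Ω`, then the non-centered maximal function `M_Ω f` is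
continuous on `Ω`. -/
theorem maximalFn_continuousOn {d : ℕ}
    (Ω : Set (EuclideanSpace ℝ (Fin d))) (hΩ : IsOpen Ω) (hΩne : Ω.Nonempty)
    (f : EuclideanSpace ℝ (Fin d) → ℝ) (hf : IntegrableOn f Ω volume)
    (hf0 : ∀ y, 0 ≤ f y)
    (husc : ∀ x ∈ Ω, UpperSemicontinuousWithinAt (upperApproxLimit f) Ω x)
    (hM : ∀ x ∈ Ω, upperApproxLimit f x ≤ (maximalFn Ω f x : EReal)) :
    ContinuousOn (maximalFn Ω f) Ω := by
  rcases Nat.eq_zero_or_pos d with rfl | hd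
  · exact Set.Subsingleton.continuousOn (Set.subsingleton_of_subsingleton) _
  set g : EuclideanSpace ℝ (Fin d) → ℝ≥0∞ := Ω.indicator (fun y => ENNReal.ofReal |f y|) with hgdef
  have hgf : ∀ y ∈ Ω, g y = ENNReal.ofReal |f y| := fun y hy => Set.indicator_of_mem hy _
  have hg : AEMeasurable g := by
    rw [hgdef, aemeasurable_indicator_iff hΩ.measurableSet]
    exact hf.1.aemeasurable.abs.ennreal_ofReal
  have hi : ∫⁻ y, g y ≠ ⊤ := by
    rw [hgdef, lintegral_indicator hΩ.measurableSet]
    have := hf.2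
    rw [hasFiniteIntegral_iff_norm] at this
    exact this.ne
  intro x hx
  refine tendsto_order.2 ⟨fun c hc => ?_, fun c hc => ?_⟩
  · obtain ⟨z, r, h1, h2, h3, h4⟩ := lt_maximalFn hc
    filter_upwards [mem_nhdsWithin_of_mem_nhds (isOpen_ball.mem_nhds h2)] with y hy
    exact h4.trans_le (le_maximalFn h1 hy h3)
  obtain ⟨T, hT1, hT2⟩ := ENNReal.lt_iff_exists_nnreal_btwn.1 hc
  by_contra hcon
  have hfr : ∃ᶠ y in 𝓝[Ω] x, (T : ℝ≥0∞) < maximalFn Ω f y := by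
    refine Frequently.mono (not_eventually.1 hcon) fun y hy => ?_
    exact hT2.trans_le (not_lt.1 hy)
  have hT0 : (T : ℝ≥0∞) ≠ 0 := (bot_lt_of_lt hT1).ne'
  obtain ⟨u, hu, huT⟩ := exists_seq_forall_of_frequently hfr
  choose z r hr hur hsub havg using fun n => lt_maximalFn (huT n)
  have hux : Tendsto u atTop (𝓝 x) := hu.mono_right nhdsWithin_le_nhds
  have havg' : ∀ n, (T : ℝ≥0∞) < (∫⁻ y in ball (z n) (r n), g y) / volume (ball (z n) (r n)) := by
    intro n
    rw [setLIntegral_congr_fun measurableSet_ball (fun y hy => hgf y (hsub n hy))]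
    exact havg n
  -- lower bound on radii
  have hlow : ∃ ρ > 0, ∀ᶠ n in atTop, ρ ≤ r n := by
    have h1 : ∀ᶠ y in 𝓝[Ω] x, upperApproxLimit f y < (((T : ℝ≥0∞)) : EReal) := by
      apply husc x hx
      exact (hM x hx).trans_lt (EReal.coe_ennreal_lt_coe_ennreal_iff.2 hT1)
    rw [hΩ.nhdsWithin_eq hx] at h1
    obtain ⟨η, hη, hη'⟩ := Metric.eventually_nhds_iff_ball.1 h1
    have hnull := aux_null f (T : ℝ) (ball x η) measurableSet_ball hη'
    refine ⟨η / 4, by positivity, ?_⟩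
    filter_upwards [hux.eventually (ball_mem_nhds x (half_pos hη))] with n hn
    by_contra hlt
    push Not at hlt
    have hbs : ball (z n) (r n) ⊆ ball x η := by
      intro w hw
      have h2 := mem_ball.1 (hur n)
      have h3 := mem_ball.1 hw
      have h4 := mem_ball.1 hn
      have := dist_triangle4 w (z n) (u n) x
      rw [dist_comm (z n)] at this
      rw [mem_ball]; linarith
    refine absurd (havg n) (not_lt.2 ?_)
    apply ENNReal.div_le_of_le_mul
    calc ∫⁻ y in ball (z n) (r n), ENNReal.ofReal |f y|
        ≤ ∫⁻ y in ball (z n) (r n), (T : ℝ≥0∞) := by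
          apply lintegral_mono_ae
          rw [ae_restrict_iff' measurableSet_ball]
          have : ∀ᵐ y, ¬ (y ∈ ball x η ∧ (T : ℝ) < f y) := by
            rw [ae_iff]; simpa using hnull
          filter_upwards [this] with y hy hyb
          rw [abs_of_nonneg (hf0 y)]
          apply ENNReal.ofReal_le_of_le_toReal
          by_contra h
          exact hy ⟨hbs hyb, by simpa using h⟩
      _ = T * volume (ball (z n) (r n)) := by simp
  obtain ⟨ρ, hρ, hρr⟩ := hlow
  -- upper bound on radii
  have hup : ∃ R : ℝ, ∀ n, r n ≤ R := by
    set v := volume (ball (0 : EuclideanSpace ℝ (Fin d)) 1) with hv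
    have hv0 : v ≠ 0 := (measure_ball_pos _ _ one_pos).ne'
    have hvt : v ≠ ⊤ := measure_ball_lt_top.ne
    have hK : (∫⁻ y, g y) / (T * v) ≠ ⊤ := ENNReal.div_ne_top hi (mul_ne_zero hT0 hv0)
    refine ⟨max 1 ((∫⁻ y, g y) / (T * v)).toReal, fun n => ?_⟩
    by_contra hlt
    push Not at hlt
    obtain ⟨h1, h2⟩ := max_lt_iff.1 hlt
    have h3 : (∫⁻ y, g y) / (T * v) < ENNReal.ofReal (r n) :=
      (ENNReal.lt_ofReal_iff_toReal_lt hK).2 h2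
    have h4 : r n ≤ r n ^ d := le_self_pow₀ h1.le hd.ne'
    have h5 : (∫⁻ y, g y) / (T * v) < ENNReal.ofReal (r n ^ d) :=
      h3.trans_le (ENNReal.ofReal_le_ofReal h4)
    refine absurd (havg' n) (not_lt.2 ?_)
    apply ENNReal.div_le_of_le_mul
    rw [Measure.addHaar_ball_of_pos _ _ (hr n), finrank_euclideanSpace_fin]
    have h6 := (ENNReal.div_le_iff (mul_ne_zero hT0 hv0)
      (ENNReal.mul_ne_top ENNReal.coe_ne_top hvt)).1 h5.le
    calc _ ≤ ∫⁻ y, g y := setLIntegral_le_lintegral _ _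
      _ ≤ _ := h6
      _ = _ := by ring
  obtain ⟨R, hR⟩ := hup
  have hcpt : IsCompact (closedBall x (1 + R) ×ˢ Set.Icc ρ R) :=
    (isCompact_closedBall _ _).prod isCompact_Icc
  have hev : ∀ᶠ n in atTop, (z n, r n) ∈ closedBall x (1 + R) ×ˢ Set.Icc ρ R := by
    filter_upwards [hρr, hux.eventually (ball_mem_nhds x one_pos)] with n h1 h2
    refine ⟨?_, h1, hR n⟩
    have h3 := mem_ball.1 (hur n)
    have h4 := mem_ball.1 h2
    have := dist_triangle (z n) (u n) x
    rw [dist_comm (z n) (u n)] at this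
    have := hR n
    simp only [mem_closedBall]; linarith
  obtain ⟨⟨z0, r0⟩, hmem, φ, hφ, hlim⟩ := hcpt.tendsto_subseq' hev.frequently
  have hz0 : Tendsto (z ∘ φ) atTop (𝓝 z0) := (continuous_fst.tendsto _).comp hlim
  have hr0 : Tendsto (r ∘ φ) atTop (𝓝 r0) := (continuous_snd.tendsto _).comp hlim
  have hr0p : 0 < r0 := hρ.trans_le hmem.2.1
  have huφ : Tendsto (u ∘ φ) atTop (𝓝 x) := hux.comp hφ.tendsto_atTop
  have hxz : dist x z0 ≤ r0 :=
    le_of_tendsto_of_tendsto' (huφ.dist hz0) hr0 fun n => (mem_ball.1 (hur (φ n))).le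
  have hb0 : ball z0 r0 ⊆ Ω := by
    intro w hw
    obtain ⟨n, hn⟩ := ((tendsto_const_nhds (x := w)).dist hz0 |>.eventually_lt hr0 hw).exists
    exact hsub (φ n) hn
  have h1 := aux_limit Ω hΩ f g hg hi hgf x z0 r0 hr0p hx hxz hb0
  have h2 := ge_of_tendsto' (aux_tendsto g hg hi _ _ z0 r0 hr0p hz0 hr0)
    (fun n => (havg' (φ n)).le)
  exact absurd hT1 (not_lt.2 (h2.trans h1))
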